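/- (Excess-risk lower bound via Lipschitzness.) Let ρ be a Borel probability measure on X × ℝ, σ > 0, and let f, g : X → ℝ be measurable functions with finite generalization errors. Then ‖f − g‖_{2,ρ} ≥ (1/(2σ)) |R^σ(f) − R^σ(g)|. Consequently, if f_σ is a minimizer of R^σ over all measurable functions with R^σ(f_σ) ≠ R^σ(f⋆), and f : X → ℝ is measurable with |R^σ(f) − R^σ(f_σ)| ≤ (1/2)|R^σ(f_σ) − R^σ(f⋆)|, then ‖f − f⋆‖_{2,ρ} ≥ (1/(4σ)) |R^σ(f_σ) − R^σ(f⋆)|. -/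

import Mathlib

open MeasureTheory

/-- The Huber loss with scale `σ`. -/
noncomputable def huberLoss (σ t : ℝ) : ℝ :=
  if |t| ≤ σ then t ^ 2 else 2 * σ * |t| - σ ^ 2

/-!
For `σ ≥ 0` the Huber loss is the upper envelope of the functions `t ↦ 2 m |t| - m ^ 2` over
`0 ≤ m ≤ σ`, each of which is `2σ`-Lipschitz, so it is `2σ`-Lipschitz itself. A pointwise
Lipschitz bound integrates to an `L¹` bound on the difference of two risks, and for a probability
measure the `L¹` norm is at most the `L²` norm. If the risk of `f` is within `|r - R(g)| / 2` of a
level `r`, then it is at least `|r - R(g)| / 2` away from `R(g)`, so `f` is bounded away from `g`.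
-/

open scoped ENNReal NNReal

theorem huberLoss_eq_min (σ t : ℝ) :
    huberLoss σ t = 2 * min |t| σ * |t| - min |t| σ ^ 2 := by
  unfold huberLoss
  split_ifs with ht
  · rw [min_eq_left ht, ← sq_abs]
    ring
  · rw [min_eq_right (not_le.1 ht).le]

theorem two_mul_abs_sub_sq_le_huberLoss {σ m : ℝ} (hm : m ≤ σ) (t : ℝ) :
    2 * m * |t| - m ^ 2 ≤ huberLoss σ t := by
  unfold huberLoss
  split_ifs with ht
  · linarith [two_mul_le_add_sq m |t|, sq_abs t]
  · have gap_nonneg : 0 ≤ (σ - m) * ((|t| - σ) + (|t| - m)) :=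
      mul_nonneg (by linarith) (by linarith)
    linarith

theorem lipschitzWith_huberLoss {σ : ℝ} (hσ : 0 ≤ σ) :
    LipschitzWith (2 * σ).toNNReal (huberLoss σ) := by
  refine LipschitzWith.of_le_add_mul' (2 * σ) fun s t => ?_
  set m := min |s| σ
  have hmσ : m ≤ σ := min_le_right _ _
  have : 0 ≤ m := le_min (abs_nonneg s) hσ
  calc
    huberLoss σ s = (2 * m * |t| - m ^ 2) + 2 * m * (|s| - |t|) := by
      rw [huberLoss_eq_min]
      ring
    _ ≤ huberLoss σ t + 2 * m * dist s t := by
      gcongr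
      · exact two_mul_abs_sub_sq_le_huberLoss hmσ t
      · exact abs_sub_abs_le_abs_sub s t
    _ ≤ huberLoss σ t + 2 * σ * dist s t := by gcongr

theorem enorm_integral_comp_sub_le_eLpNorm_one {Ω E F : Type*} [MeasurableSpace Ω]
    [SeminormedAddCommGroup E] [NormedAddCommGroup F] [NormedSpace ℝ F] {μ : Measure Ω}
    {φ : E → F} {K : ℝ≥0} (hφ : LipschitzWith K φ) {u v : Ω → E}
    (hu : Integrable (fun ω => φ (u ω)) μ) (hv : Integrable (fun ω => φ (v ω)) μ) :
    ‖∫ ω, φ (u ω) ∂μ - ∫ ω, φ (v ω) ∂μ‖ₑ ≤ K * eLpNorm (fun ω => u ω - v ω) 1 μ :=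
  calc
    ‖∫ ω, φ (u ω) ∂μ - ∫ ω, φ (v ω) ∂μ‖ₑ = ‖∫ ω, (φ (u ω) - φ (v ω)) ∂μ‖ₑ := by
      rw [integral_sub hu hv]
    _ ≤ ∫⁻ ω, ‖φ (u ω) - φ (v ω)‖ₑ ∂μ := enorm_integral_le_lintegral_enorm _
    _ ≤ ∫⁻ ω, K * ‖u ω - v ω‖ₑ ∂μ := by
      gcongr with ω
      simpa only [edist_eq_enorm_sub] using hφ (u ω) (v ω)
    _ = K * eLpNorm (fun ω => u ω - v ω) 1 μ := by
      rw [lintegral_const_mul' _ _ ENNReal.coe_ne_top, eLpNorm_one_eq_lintegral_enorm]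

/-- The risk (generalization error) of the predictor `f` for the loss `ℓ`, evaluated at the
residual `y - f x`. As a Bochner integral it is `0` when the loss is not integrable. -/
noncomputable def risk {X E : Type*} [MeasurableSpace X] [MeasurableSpace E] [Sub E]
    (ℓ : E → ℝ) (ρ : Measure (X × E)) (f : X → E) : ℝ :=
  ∫ z, ℓ (z.2 - f z.1) ∂ρ

theorem enorm_risk_sub_le_eLpNorm {X E : Type*} [MeasurableSpace X] [MeasurableSpace E]
    [SeminormedAddCommGroup E] {ρ : Measure (X × E)} [IsProbabilityMeasure ρ]
    {ℓ : E → ℝ} {K : ℝ≥0} (hℓ : LipschitzWith K ℓ) {p : ℝ≥0∞} (hp : 1 ≤ p) {f g : X → E}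
    (hfg : AEStronglyMeasurable (f - g) ρ.fst)
    (hf : Integrable (fun z => ℓ (z.2 - f z.1)) ρ)
    (hg : Integrable (fun z => ℓ (z.2 - g z.1)) ρ) :
    ‖risk ℓ ρ f - risk ℓ ρ g‖ₑ ≤ K * eLpNorm (f - g) p ρ.fst :=
  calc
    ‖risk ℓ ρ f - risk ℓ ρ g‖ₑ = ‖risk ℓ ρ g - risk ℓ ρ f‖ₑ := enorm_sub_rev _ _
    _ ≤ K * eLpNorm (fun z : X × E => (z.2 - g z.1) - (z.2 - f z.1)) 1 ρ :=
      enorm_integral_comp_sub_le_eLpNorm_one hℓ hg hf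
    _ = K * eLpNorm ((f - g) ∘ Prod.fst) 1 ρ := by
      simp only [sub_sub_sub_cancel_left]
      rfl
    _ = K * eLpNorm (f - g) 1 ρ.fst := by
      rw [Measure.fst, eLpNorm_map_measure hfg measurable_fst.aemeasurable]
    _ ≤ K * eLpNorm (f - g) p ρ.fst := by
      gcongr
      exact eLpNorm_le_eLpNorm_of_exponent_le hp hfg

theorem excess_risk_lower_bound_general {X : Type*} [MeasurableSpace X]
    {ρ : Measure (X × ℝ)} [IsProbabilityMeasure ρ] {σ : ℝ} (hσ : 0 < σ)
    {p : ℝ≥0∞} (hp : 1 ≤ p) {f g : X → ℝ} (hfg : AEStronglyMeasurable (f - g) ρ.fst)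
    (hf : Integrable (fun z => huberLoss σ (z.2 - f z.1)) ρ)
    (hg : Integrable (fun z => huberLoss σ (z.2 - g z.1)) ρ) :
    ENNReal.ofReal ((1 / (2 * σ)) * |risk (huberLoss σ) ρ f - risk (huberLoss σ) ρ g|)
        ≤ eLpNorm (f - g) p ρ.fst
    ∧ ∀ r : ℝ, |risk (huberLoss σ) ρ f - r| ≤ (1 / 2) * |r - risk (huberLoss σ) ρ g| →
        ENNReal.ofReal ((1 / (4 * σ)) * |r - risk (huberLoss σ) ρ g|)
          ≤ eLpNorm (f - g) p ρ.fst := by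
  set Rf := risk (huberLoss σ) ρ f
  set Rg := risk (huberLoss σ) ρ g
  have risk_gap_le : ENNReal.ofReal ((1 / (2 * σ)) * |Rf - Rg|) ≤ eLpNorm (f - g) p ρ.fst := by
    rw [one_div_mul_eq_div, ENNReal.ofReal_div_of_pos (by positivity),
      ← Real.enorm_eq_ofReal_abs]
    exact ENNReal.div_le_of_le_mul'
      (enorm_risk_sub_le_eLpNorm (lipschitzWith_huberLoss hσ.le) hp hfg hf hg)
  refine ⟨risk_gap_le, fun r hr => le_trans (ENNReal.ofReal_le_ofReal ?_) risk_gap_le⟩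
  have half_gap_le : (1 / 2) * |r - Rg| ≤ |Rf - Rg| := by
    linarith [abs_sub_le r Rf Rg, abs_sub_comm r Rf]
  calc
    1 / (4 * σ) * |r - Rg| = 1 / (2 * σ) * (1 / 2 * |r - Rg|) := by ring
    _ ≤ 1 / (2 * σ) * |Rf - Rg| := by gcongr

/-- Excess-risk lower bound via Lipschitzness: for measurable `f, g` with finite
generalization errors, `‖f − g‖_{2,ρ} ≥ (1/(2σ)) |R^σ(f) − R^σ(g)|`; consequently, if
`f_σ` minimizes `R^σ` over measurable functions, `R^σ(f_σ) ≠ R^σ(f⋆)`, and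
`|R^σ(f) − R^σ(f_σ)| ≤ (1/2)|R^σ(f_σ) − R^σ(f⋆)|`, then
`‖f − f⋆‖_{2,ρ} ≥ (1/(4σ)) |R^σ(f_σ) − R^σ(f⋆)|`. -/
theorem excess_risk_lower_bound
    {X : Type*} [MeasurableSpace X] [MetricSpace X] [CompactSpace X] [BorelSpace X]
    (ρ : Measure (X × ℝ)) [IsProbabilityMeasure ρ]
    (σ : ℝ) (hσ : 0 < σ)
    (fstar : X → ℝ) (hfstar_meas : Measurable fstar)
    (M : ℝ) (hfstar_bdd : ∀ x, |fstar x| ≤ M)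
    (hfstar_int : Integrable (fun p : X × ℝ => huberLoss σ (p.2 - fstar p.1)) ρ) :
    (∀ f g : X → ℝ, Measurable f → Measurable g →
      Integrable (fun p : X × ℝ => huberLoss σ (p.2 - f p.1)) ρ →
      Integrable (fun p : X × ℝ => huberLoss σ (p.2 - g p.1)) ρ →
      ENNReal.ofReal ((1 / (2 * σ)) *
          |(∫ p, huberLoss σ (p.2 - f p.1) ∂ρ) - ∫ p, huberLoss σ (p.2 - g p.1) ∂ρ|)
        ≤ eLpNorm (fun x => f x - g x) 2 ρ.fst)
    ∧ (∀ fσ : X → ℝ, Measurable fσ →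
        Integrable (fun p : X × ℝ => huberLoss σ (p.2 - fσ p.1)) ρ →
        (∀ g : X → ℝ, Measurable g →
          Integrable (fun p : X × ℝ => huberLoss σ (p.2 - g p.1)) ρ →
          (∫ p, huberLoss σ (p.2 - fσ p.1) ∂ρ) ≤ ∫ p, huberLoss σ (p.2 - g p.1) ∂ρ) →
        (∫ p, huberLoss σ (p.2 - fσ p.1) ∂ρ) ≠ (∫ p, huberLoss σ (p.2 - fstar p.1) ∂ρ) →
        ∀ f : X → ℝ, Measurable f →
          Integrable (fun p : X × ℝ => huberLoss σ (p.2 - f p.1)) ρ →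
          |(∫ p, huberLoss σ (p.2 - f p.1) ∂ρ) - ∫ p, huberLoss σ (p.2 - fσ p.1) ∂ρ|
            ≤ (1 / 2) *
              |(∫ p, huberLoss σ (p.2 - fσ p.1) ∂ρ) - ∫ p, huberLoss σ (p.2 - fstar p.1) ∂ρ| →
          ENNReal.ofReal ((1 / (4 * σ)) *
              |(∫ p, huberLoss σ (p.2 - fσ p.1) ∂ρ) - ∫ p, huberLoss σ (p.2 - fstar p.1) ∂ρ|)
            ≤ eLpNorm (fun x => f x - fstar x) 2 ρ.fst) :=
  ⟨fun _ _ hf hg hfi hgi =>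
    (excess_risk_lower_bound_general hσ one_le_two (hf.sub hg).aestronglyMeasurable hfi hgi).1,
  fun _ _ _ _ _ _ hf hfi => (excess_risk_lower_bound_general hσ one_le_two
    (hf.sub hfstar_meas).aestronglyMeasurable hfi hfstar_int).2 _⟩
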